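/- arXiv:1402.1282 — 4 statements merged into one kernel-verified Lean document; each statement's English description precedes it below -/
import Mathlib

section
/- Splitting map f_χ for the solution space (first part of the paper's Lemma on splitting the exact sequence): Let (V, W, f, G₊, G₋) be an abstract Green-hyperbolic operator with causal Green function G, and let (χ₊, χ₋) be an adapted partition of unity. Then for every ψ ∈ V_SC with f ψ = 0: f(χ₊ ψ) ∈ W₀, f(χ₊ ψ) = −f(χ₋ ψ), and G(f(χ₊ ψ)) = ψ. Hence f_χ : {v ∈ V_SC : f v = 0} → W₀, f_χ(ψ) = f(χ₊ ψ), is a well-defined linear map with G ∘ f_χ = id on {v ∈ V_SC : f v = 0}. -/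
/-- An abstract Green-hyperbolic operator: real vector spaces `V`, `W` with subspaces
of compactly supported (`0`), retarded (`p`), advanced (`m`) and spacelike compactly
supported (`SC`) elements, a linear map `f` preserving the supports, and retarded and
advanced Green functions `Gp`, `Gm` (defined on `Wp`, `Wm` respectively, here modeled
as linear maps on all of `W` whose defining properties are only imposed on `Wp`, `Wm`). -/
structure AGH (V : Type*) (W : Type*) [AddCommGroup V] [Module ℝ V]
    [AddCommGroup W] [Module ℝ W] where
  V0 : Submodule ℝ V
  Vp : Submodule ℝ V
  Vm : Submodule ℝ V
  VSC : Submodule ℝ V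
  W0 : Submodule ℝ W
  Wp : Submodule ℝ W
  Wm : Submodule ℝ W
  WSC : Submodule ℝ W
  hVp : Vp ≤ VSC
  hVm : Vm ≤ VSC
  hV0 : V0 = Vp ⊓ Vm
  hWp : Wp ≤ WSC
  hWm : Wm ≤ WSC
  hW0 : W0 = Wp ⊓ Wm
  f : V →ₗ[ℝ] W
  f_mem_p : ∀ v ∈ Vp, f v ∈ Wp
  f_mem_m : ∀ v ∈ Vm, f v ∈ Wm
  f_mem_sc : ∀ v ∈ VSC, f v ∈ WSC
  Gp : W →ₗ[ℝ] V
  Gm : W →ₗ[ℝ] V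
  Gp_mem : ∀ w ∈ Wp, Gp w ∈ Vp
  Gm_mem : ∀ w ∈ Wm, Gm w ∈ Vm
  Gp_f : ∀ v ∈ Vp, Gp (f v) = v
  Gm_f : ∀ v ∈ Vm, Gm (f v) = v
  f_Gp : ∀ w ∈ Wp, f (Gp w) = w
  f_Gm : ∀ w ∈ Wm, f (Gm w) = w

/-- The causal Green function `G = G₊ − G₋` (meaningful on `W₀ = Wp ⊓ Wm`). -/
def AGH.G {V W : Type*} [AddCommGroup V] [Module ℝ V] [AddCommGroup W] [Module ℝ W]
    (D : AGH V W) : W →ₗ[ℝ] V := D.Gp - D.Gm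

/-- An adapted partition of unity for an abstract Green-hyperbolic operator,
abstracting multiplication by a partition of unity adapted to a Cauchy surface. -/
structure AGH.Partition {V W : Type*} [AddCommGroup V] [Module ℝ V]
    [AddCommGroup W] [Module ℝ W] (D : AGH V W) where
  chiVp : V →ₗ[ℝ] V
  chiVm : V →ₗ[ℝ] V
  chiWp : W →ₗ[ℝ] W
  chiWm : W →ₗ[ℝ] W
  sumV : ∀ v ∈ D.VSC, chiVp v + chiVm v = v
  memVp : ∀ v ∈ D.VSC, chiVp v ∈ D.Vp
  memVm : ∀ v ∈ D.VSC, chiVm v ∈ D.Vm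
  sumW : ∀ w ∈ D.WSC, chiWp w + chiWm w = w
  memWp : ∀ w ∈ D.WSC, chiWp w ∈ D.Wp
  memWm : ∀ w ∈ D.WSC, chiWm w ∈ D.Wm

namespace AGH

variable {V W : Type*} [AddCommGroup V] [Module ℝ V] [AddCommGroup W] [Module ℝ W]

section CausalGreenFunction

variable (D : AGH V W) {a b : V}

theorem f_mem_W0 (ha : a ∈ D.Vp) (hb : b ∈ D.Vm) (hab : D.f a = -D.f b) : D.f a ∈ D.W0 := by
  rw [D.hW0]
  exact ⟨D.f_mem_p a ha, hab ▸ D.Wm.neg_mem (D.f_mem_m b hb)⟩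

-- `a` and `-b` have the same image under `f`; `G₊` recovers the first from it, `G₋` the second.
theorem G_f_eq_add (ha : a ∈ D.Vp) (hb : b ∈ D.Vm) (hab : D.f a = -D.f b) :
    D.G (D.f a) = a + b :=
  calc
    D.G (D.f a) = D.Gp (D.f a) - D.Gm (D.f a) := rfl
    _ = D.Gp (D.f a) + D.Gm (D.f b) := by rw [hab, map_neg D.Gm, sub_neg_eq_add]
    _ = a + b := by rw [D.Gp_f a ha, D.Gm_f b hb]

end CausalGreenFunction

/-- The space `{v ∈ V_SC : f v = 0}` of spacelike compactly supported solutions, as a subspace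
of `V`. -/
def solutions (D : AGH V W) : Submodule ℝ V := D.VSC ⊓ LinearMap.ker D.f

namespace Partition

variable {D : AGH V W} (χ : D.Partition)

theorem f_chiVp_eq_neg_f_chiVm {ψ : V} (hψ : ψ ∈ D.solutions) :
    D.f (χ.chiVp ψ) = -D.f (χ.chiVm ψ) := by
  rw [eq_neg_iff_add_eq_zero, ← map_add, χ.sumV ψ hψ.1]
  exact hψ.2

/-- The splitting map `f_χ : ψ ↦ f (χ₊ ψ)`, from the solution space to the compactly supported
elements of `W`. -/
def splittingMap : D.solutions →ₗ[ℝ] D.W0 :=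
  (D.f ∘ₗ χ.chiVp).restrict fun ψ hψ ↦
    D.f_mem_W0 (χ.memVp ψ hψ.1) (χ.memVm ψ hψ.1) (χ.f_chiVp_eq_neg_f_chiVm hψ)

theorem G_comp_splittingMap :
    D.G ∘ₗ D.W0.subtype ∘ₗ χ.splittingMap = D.solutions.subtype := by
  ext ⟨ψ, hψ⟩
  calc
    D.G (D.f (χ.chiVp ψ)) = χ.chiVp ψ + χ.chiVm ψ :=
      D.G_f_eq_add (χ.memVp ψ hψ.1) (χ.memVm ψ hψ.1) (χ.f_chiVp_eq_neg_f_chiVm hψ)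
    _ = ψ := χ.sumV ψ hψ.1

end Partition

end AGH

/-- Splitting map `f_χ` for the solution space: for every spacelike compactly supported
solution `ψ` of `f ψ = 0`, `f (χ₊ ψ)` is compactly supported, equals `−f (χ₋ ψ)`, and
`G (f (χ₊ ψ)) = ψ`; hence `f_χ ψ = f (χ₊ ψ)` is a well-defined linear map into `W₀`
with `G ∘ f_χ = id` on the solution space. -/
theorem statement1 {V W : Type*} [AddCommGroup V] [Module ℝ V]
    [AddCommGroup W] [Module ℝ W] (D : AGH V W) (χ : AGH.Partition D) :
    ∀ ψ ∈ D.VSC, D.f ψ = 0 →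
      D.f (χ.chiVp ψ) ∈ D.W0 ∧
      D.f (χ.chiVp ψ) = - D.f (χ.chiVm ψ) ∧
      D.G (D.f (χ.chiVp ψ)) = ψ := by
  intro ψ hψ hfψ
  let ψ' : D.solutions := ⟨ψ, hψ, hfψ⟩
  exact ⟨(χ.splittingMap ψ').2, χ.f_chiVp_eq_neg_f_chiVm ψ'.2,
    LinearMap.congr_fun χ.G_comp_splittingMap ψ'⟩
end

section
/- Alternative forms and nondegeneracy of the Green pairing (abstract form of the paper's Lemma on the Green pairing): Let (f, f*, B, B') be a compatible adjoint pair with causal Green functions G and G*. Set Sol = {v ∈ V_SC : f v = 0} and Sol* = {v ∈ V_SC : f* v = 0}. Then there is a unique bilinear map ⟨−,−⟩_G : Sol × Sol* → ℝ such that ⟨G α, G* β⟩_G = B(G α, β) for all α, β ∈ W₀ (that is, the right-hand side depends only on G α and G* β and not on the choice of α and β); this map also satisfies ⟨G α, G* β⟩_G = −B(G* β, α); and it is nondegenerate in both arguments. -/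
/-- A compatible adjoint pair: two abstract Green-hyperbolic operators `f` and `fs`
(for `f*`) on the same real vector spaces `V`, `W` with the same support subspaces,
each admitting an adapted partition of unity (here given by `chi` maps, which only
see the subspaces), with retarded/advanced Green functions `Gp`, `Gm` (for `f`) and
`Gsp`, `Gsm` (for `f*`), together with bilinear pairings `B` (abstracting the
integration pairing on `V_SC × W₀`) and `B'` (on `V₀ × W_SC`) satisfying the
adjointness, antisymmetry and nondegeneracy laws. All partially-defined maps are
modeled as linear maps on the full spaces whose defining properties are imposed
only on the relevant subspaces. -/
structure CAP (V : Type*) (W : Type*) [AddCommGroup V] [Module ℝ V]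
    [AddCommGroup W] [Module ℝ W] where
  V0 : Submodule ℝ V
  Vp : Submodule ℝ V
  Vm : Submodule ℝ V
  VSC : Submodule ℝ V
  W0 : Submodule ℝ W
  Wp : Submodule ℝ W
  Wm : Submodule ℝ W
  WSC : Submodule ℝ W
  hVp : Vp ≤ VSC
  hVm : Vm ≤ VSC
  hV0 : V0 = Vp ⊓ Vm
  hWp : Wp ≤ WSC
  hWm : Wm ≤ WSC
  hW0 : W0 = Wp ⊓ Wm
  f : V →ₗ[ℝ] W
  fs : V →ₗ[ℝ] W
  f_mem_p : ∀ v ∈ Vp, f v ∈ Wp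
  f_mem_m : ∀ v ∈ Vm, f v ∈ Wm
  f_mem_sc : ∀ v ∈ VSC, f v ∈ WSC
  fs_mem_p : ∀ v ∈ Vp, fs v ∈ Wp
  fs_mem_m : ∀ v ∈ Vm, fs v ∈ Wm
  fs_mem_sc : ∀ v ∈ VSC, fs v ∈ WSC
  Gp : W →ₗ[ℝ] V
  Gm : W →ₗ[ℝ] V
  Gsp : W →ₗ[ℝ] V
  Gsm : W →ₗ[ℝ] V
  Gp_mem : ∀ w ∈ Wp, Gp w ∈ Vp
  Gm_mem : ∀ w ∈ Wm, Gm w ∈ Vm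
  Gsp_mem : ∀ w ∈ Wp, Gsp w ∈ Vp
  Gsm_mem : ∀ w ∈ Wm, Gsm w ∈ Vm
  Gp_f : ∀ v ∈ Vp, Gp (f v) = v
  Gm_f : ∀ v ∈ Vm, Gm (f v) = v
  f_Gp : ∀ w ∈ Wp, f (Gp w) = w
  f_Gm : ∀ w ∈ Wm, f (Gm w) = w
  Gsp_fs : ∀ v ∈ Vp, Gsp (fs v) = v
  Gsm_fs : ∀ v ∈ Vm, Gsm (fs v) = v
  fs_Gsp : ∀ w ∈ Wp, fs (Gsp w) = w
  fs_Gsm : ∀ w ∈ Wm, fs (Gsm w) = w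
  chiVp : V →ₗ[ℝ] V
  chiVm : V →ₗ[ℝ] V
  chiWp : W →ₗ[ℝ] W
  chiWm : W →ₗ[ℝ] W
  chi_sumV : ∀ v ∈ VSC, chiVp v + chiVm v = v
  chi_memVp : ∀ v ∈ VSC, chiVp v ∈ Vp
  chi_memVm : ∀ v ∈ VSC, chiVm v ∈ Vm
  chi_sumW : ∀ w ∈ WSC, chiWp w + chiWm w = w
  chi_memWp : ∀ w ∈ WSC, chiWp w ∈ Wp
  chi_memWm : ∀ w ∈ WSC, chiWm w ∈ Wm
  B : V →ₗ[ℝ] W →ₗ[ℝ] ℝ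
  B' : V →ₗ[ℝ] W →ₗ[ℝ] ℝ
  adj1 : ∀ v ∈ VSC, ∀ u ∈ V0, B v (fs u) = B' u (f v)
  adj2 : ∀ v ∈ VSC, ∀ u ∈ V0, B v (f u) = B' u (fs v)
  skew : ∀ w ∈ W0, ∀ w' ∈ W0, B ((Gp - Gm) w) w' = - B ((Gsp - Gsm) w') w
  nd1 : ∀ v ∈ VSC, (∀ w ∈ W0, B v w = 0) → v = 0
  nd2 : ∀ w ∈ W0, (∀ v ∈ VSC, B v w = 0) → w = 0

variable {V W : Type*} [AddCommGroup V] [Module ℝ V] [AddCommGroup W] [Module ℝ W]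

/-- The causal Green function `G = G₊ − G₋` of `f`. -/
def CAP.G (P : CAP V W) : W →ₗ[ℝ] V := P.Gp - P.Gm

/-- The causal Green function `G* = G*₊ − G*₋` of `f*`. -/
def CAP.Gs (P : CAP V W) : W →ₗ[ℝ] V := P.Gsp - P.Gsm

/-- The space of spacelike compactly supported solutions of `f ψ = 0`. -/
def CAP.Sol (P : CAP V W) : Submodule ℝ V := P.VSC ⊓ LinearMap.ker P.f

/-- The space of spacelike compactly supported solutions of `f* ψ = 0`. -/
def CAP.SolS (P : CAP V W) : Submodule ℝ V := P.VSC ⊓ LinearMap.ker P.fs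

/-!
The causal Green function `G` maps `W₀` onto `Sol`: if `f (v₊ + v₋) = 0` with `v₊ ∈ V₊` and
`v₋ ∈ V₋`, then `f v₊ = -f v₋` lies in `W₀` and `G` sends it to `v₊ + v₋`. The same holds for `G*`
and `Sol*`. The form `(α, β) ↦ B (G α) β` on `W₀` has left kernel `ker G` because `B` separates
points, and right kernel `ker G*` because it equals `-B (G* β) α`. Hence it descends to
`W₀ / ker G × W₀ / ker G* ≅ Sol × Sol*`, and the quotients are exactly those that make it
nondegenerate.
-/

section Descent

variable {R A C X Y M : Type*} [CommRing R] [AddCommGroup A] [Module R A] [AddCommGroup C]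
  [Module R C] [AddCommGroup X] [Module R X] [AddCommGroup Y] [Module R Y] [AddCommGroup M]
  [Module R M] {p : A →ₗ[R] X} {q : C →ₗ[R] Y}

theorem existsUnique_compl₁₂_eq (hp : Function.Surjective p) (hq : Function.Surjective q)
    {b : A →ₗ[R] C →ₗ[R] M} (hpb : p.ker ≤ b.ker) (hqb : q.ker ≤ b.flip.ker) :
    ∃! Φ : X →ₗ[R] Y →ₗ[R] M, Φ.compl₁₂ p q = b := by
  refine ⟨(b.liftQ₂ p.ker q.ker hpb hqb).compl₁₂ (p.quotKerEquivOfSurjective hp).symm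
    (q.quotKerEquivOfSurjective hq).symm, ?_, fun Φ hΦ ↦ ?_⟩
  · ext a c
    simp
  · rw [← LinearMap.compl₁₂_inj hp hq, hΦ]
    ext a c
    simp

theorem separatingLeft_of_ker_compl₁₂_le (hp : Function.Surjective p) {Φ : X →ₗ[R] Y →ₗ[R] M}
    (h : (Φ.compl₁₂ p q).ker ≤ p.ker) : Φ.SeparatingLeft := by
  intro x hx
  obtain ⟨a, rfl⟩ := hp x
  exact h (LinearMap.ext fun c ↦ hx (q c))

theorem nondegenerate_of_ker_compl₁₂_le (hp : Function.Surjective p) (hq : Function.Surjective q)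
    {Φ : X →ₗ[R] Y →ₗ[R] M} (hleft : (Φ.compl₁₂ p q).ker ≤ p.ker)
    (hright : (Φ.compl₁₂ p q).flip.ker ≤ q.ker) : Φ.Nondegenerate :=
  ⟨separatingLeft_of_ker_compl₁₂_le hp hleft,
    LinearMap.flip_separatingLeft.1 (separatingLeft_of_ker_compl₁₂_le hq hright)⟩

end Descent

section GreenFunction

variable {R E F : Type*} [Ring R] [AddCommGroup E] [Module R E] [AddCommGroup F] [Module R F]

/-- `g` is a Green function of `f` for the support condition given by `p` and `q`: the two maps
restrict to mutually inverse bijections between `p` and `q`. As in `CAP`, `g` is defined on the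
whole space and constrained only on `q`. -/
structure IsGreenFunction (f : E →ₗ[R] F) (g : F →ₗ[R] E) (p : Submodule R E)
    (q : Submodule R F) : Prop where
  mapsTo : Set.MapsTo f p q
  mapsTo_green : Set.MapsTo g q p
  invOn : Set.InvOn g f p q

theorem IsGreenFunction.map_sub_eq_sup_inf_ker {f : E →ₗ[R] F} {gp gm : F →ₗ[R] E}
    {Ep Em : Submodule R E} {Fp Fm : Submodule R F} (hp : IsGreenFunction f gp Ep Fp)
    (hm : IsGreenFunction f gm Em Fm) : (Fp ⊓ Fm).map (gp - gm) = (Ep ⊔ Em) ⊓ f.ker := by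
  apply le_antisymm
  · rintro _ ⟨w, ⟨hwp, hwm⟩, rfl⟩
    refine ⟨sub_mem (Submodule.mem_sup_left (hp.mapsTo_green hwp))
      (Submodule.mem_sup_right (hm.mapsTo_green hwm)), ?_⟩
    rw [SetLike.mem_coe, LinearMap.mem_ker, LinearMap.sub_apply, map_sub, hp.invOn.2 hwp,
      hm.invOn.2 hwm, sub_self]
  · rintro v ⟨hv, hfv⟩
    obtain ⟨a, ha, b, hb, rfl⟩ := Submodule.mem_sup.1 hv
    have hnb : -b ∈ Em := neg_mem hb
    have hfab : f a = f (-b) := by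
      rwa [map_neg, eq_neg_iff_add_eq_zero, ← map_add]
    refine ⟨f a, ⟨hp.mapsTo ha, hfab ▸ hm.mapsTo hnb⟩, ?_⟩
    rw [LinearMap.sub_apply, hp.invOn.1 ha, hfab, hm.invOn.1 hnb, sub_neg_eq_add]

end GreenFunction

section GreenPairing

variable {R E F M : Type*} [CommRing R] [AddCommGroup E] [Module R E] [AddCommGroup F] [Module R F]
  [AddCommGroup M] [Module R M]

/-- The bilinear form `(α, β) ↦ B (G α) β` on the space `F₀` of sources, from which the Green
pairing descends. -/
def sourceForm (B : E →ₗ[R] F →ₗ[R] M) (G : F →ₗ[R] E) (F₀ : Submodule R F) :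
    F₀ →ₗ[R] F₀ →ₗ[R] M :=
  (B ∘ₗ G).domRestrict₁₂ F₀ F₀

/-- `Φ` is a Green pairing of `S` with `T` if `Φ (G α) (G* β) = B (G α) β` for all sources
`α, β ∈ F₀`. Elements of `S` and `T` equal to `G α` and `G* β` are quantified over, so that the
notion makes sense without assuming that `G` and `G*` take values in `S` and `T`. -/
def IsGreenPairing (B : E →ₗ[R] F →ₗ[R] M) (G Gs : F →ₗ[R] E) (F₀ : Submodule R F)
    {S T : Submodule R E} (Φ : S →ₗ[R] T →ₗ[R] M) : Prop :=
  ∀ α ∈ F₀, ∀ β ∈ F₀, ∀ (x : S) (y : T), (x : E) = G α → (y : E) = Gs β → Φ x y = B (G α) β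

variable {B : E →ₗ[R] F →ₗ[R] M} {G Gs : F →ₗ[R] E} {F₀ : Submodule R F}

theorem sourceForm_apply (α β : F₀) : sourceForm B G F₀ α β = B (G α) β :=
  rfl

theorem ker_sourceForm (hB : ∀ v ∈ F₀.map G, (∀ w ∈ F₀, B v w = 0) → v = 0) :
    (sourceForm B G F₀).ker = (G.submoduleMap F₀).ker := by
  ext α
  constructor
  · intro hα
    exact Subtype.ext (hB _ (Submodule.mem_map_of_mem α.2) fun w hw ↦
      LinearMap.congr_fun hα ⟨w, hw⟩)
  · intro hα
    have hGα : G α = 0 := congrArg Subtype.val hα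
    ext β
    rw [sourceForm_apply, hGα, map_zero, LinearMap.zero_apply, LinearMap.zero_apply]

theorem flip_sourceForm (hskew : ∀ α ∈ F₀, ∀ β ∈ F₀, B (G α) β = -B (Gs β) α) :
    (sourceForm B G F₀).flip = -sourceForm B Gs F₀ := by
  ext β α
  exact hskew α α.2 β β.2

theorem ker_flip_sourceForm (hskew : ∀ α ∈ F₀, ∀ β ∈ F₀, B (G α) β = -B (Gs β) α)
    (hB : ∀ v ∈ F₀.map Gs, (∀ w ∈ F₀, B v w = 0) → v = 0) :
    (sourceForm B G F₀).flip.ker = (Gs.submoduleMap F₀).ker := by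
  rw [flip_sourceForm hskew, LinearMap.ker_neg, ker_sourceForm hB]

theorem isGreenPairing_iff_compl₁₂_submoduleMap {Φ : F₀.map G →ₗ[R] F₀.map Gs →ₗ[R] M} :
    IsGreenPairing B G Gs F₀ Φ ↔
      Φ.compl₁₂ (G.submoduleMap F₀) (Gs.submoduleMap F₀) = sourceForm B G F₀ := by
  constructor
  · intro h
    ext α β
    exact h α α.2 β β.2 _ _ rfl rfl
  · rintro h α hα β hβ ⟨_, _⟩ ⟨_, _⟩ rfl rfl
    exact LinearMap.congr_fun₂ h ⟨α, hα⟩ ⟨β, hβ⟩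

variable {S T : Submodule R E}

theorem existsUnique_isGreenPairing (hS : F₀.map G = S) (hT : F₀.map Gs = T)
    (hskew : ∀ α ∈ F₀, ∀ β ∈ F₀, B (G α) β = -B (Gs β) α)
    (hBS : ∀ v ∈ S, (∀ w ∈ F₀, B v w = 0) → v = 0)
    (hBT : ∀ v ∈ T, (∀ w ∈ F₀, B v w = 0) → v = 0) :
    ∃! Φ : S →ₗ[R] T →ₗ[R] M, IsGreenPairing B G Gs F₀ Φ := by
  subst hS hT
  simp only [isGreenPairing_iff_compl₁₂_submoduleMap]
  exact existsUnique_compl₁₂_eq (G.submoduleMap_surjective F₀) (Gs.submoduleMap_surjective F₀)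
    (ker_sourceForm hBS).ge (ker_flip_sourceForm hskew hBT).ge

theorem IsGreenPairing.nondegenerate (hS : F₀.map G = S) (hT : F₀.map Gs = T)
    (hskew : ∀ α ∈ F₀, ∀ β ∈ F₀, B (G α) β = -B (Gs β) α)
    (hBS : ∀ v ∈ S, (∀ w ∈ F₀, B v w = 0) → v = 0)
    (hBT : ∀ v ∈ T, (∀ w ∈ F₀, B v w = 0) → v = 0)
    {Φ : S →ₗ[R] T →ₗ[R] M} (hΦ : IsGreenPairing B G Gs F₀ Φ) : Φ.Nondegenerate := by
  subst hS hT
  rw [isGreenPairing_iff_compl₁₂_submoduleMap] at hΦ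
  apply nondegenerate_of_ker_compl₁₂_le (G.submoduleMap_surjective F₀)
    (Gs.submoduleMap_surjective F₀) <;> rw [hΦ]
  · exact (ker_sourceForm hBS).le
  · exact (ker_flip_sourceForm hskew hBT).le

theorem statement5_general {f fs : E →ₗ[R] F} {Gp Gm Gsp Gsm : F →ₗ[R] E}
    {Ep Em ESC : Submodule R E} {Fp Fm F₀ : Submodule R F}
    (hGp : IsGreenFunction f Gp Ep Fp) (hGm : IsGreenFunction f Gm Em Fm)
    (hGsp : IsGreenFunction fs Gsp Ep Fp) (hGsm : IsGreenFunction fs Gsm Em Fm)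
    (hESC : ESC = Ep ⊔ Em) (hF₀ : F₀ = Fp ⊓ Fm)
    (hskew : ∀ α ∈ F₀, ∀ β ∈ F₀, B ((Gp - Gm) α) β = -B ((Gsp - Gsm) β) α)
    (hB : ∀ v ∈ ESC, (∀ w ∈ F₀, B v w = 0) → v = 0) :
    (∃! Φ : ↥(ESC ⊓ f.ker) →ₗ[R] ↥(ESC ⊓ fs.ker) →ₗ[R] M,
      IsGreenPairing B (Gp - Gm) (Gsp - Gsm) F₀ Φ) ∧
    ∀ Φ : ↥(ESC ⊓ f.ker) →ₗ[R] ↥(ESC ⊓ fs.ker) →ₗ[R] M,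
      IsGreenPairing B (Gp - Gm) (Gsp - Gsm) F₀ Φ →
      (∀ α ∈ F₀, ∀ β ∈ F₀, ∀ (x : ↥(ESC ⊓ f.ker)) (y : ↥(ESC ⊓ fs.ker)),
        (x : E) = (Gp - Gm) α → (y : E) = (Gsp - Gsm) β → Φ x y = -B ((Gsp - Gsm) β) α) ∧
      Φ.Nondegenerate := by
  have hSol : F₀.map (Gp - Gm) = ESC ⊓ f.ker := by
    rw [hF₀, hESC, hGp.map_sub_eq_sup_inf_ker hGm]
  have hSolS : F₀.map (Gsp - Gsm) = ESC ⊓ fs.ker := by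
    rw [hF₀, hESC, hGsp.map_sub_eq_sup_inf_ker hGsm]
  have hBSol : ∀ v ∈ ESC ⊓ f.ker, (∀ w ∈ F₀, B v w = 0) → v = 0 := fun v hv ↦ hB v hv.1
  have hBSolS : ∀ v ∈ ESC ⊓ fs.ker, (∀ w ∈ F₀, B v w = 0) → v = 0 := fun v hv ↦ hB v hv.1
  refine ⟨existsUnique_isGreenPairing hSol hSolS hskew hBSol hBSolS, fun Φ hΦ ↦
    ⟨fun α hα β hβ x y hx hy ↦ ?_, hΦ.nondegenerate hSol hSolS hskew hBSol hBSolS⟩⟩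
  rw [hΦ α hα β hβ x y hx hy, hskew α hα β hβ]

end GreenPairing

theorem CAP.VSC_eq_sup (P : CAP V W) : P.VSC = P.Vp ⊔ P.Vm :=
  le_antisymm
    (fun v hv ↦ Submodule.mem_sup.2
      ⟨_, P.chi_memVp v hv, _, P.chi_memVm v hv, P.chi_sumV v hv⟩)
    (sup_le P.hVp P.hVm)

/-- Alternative forms and nondegeneracy of the Green pairing: there is a unique
bilinear map `⟨−,−⟩_G : Sol × Sol* → ℝ` with `⟨G α, G* β⟩_G = B (G α) β` for all
`α, β ∈ W₀`; it also satisfies `⟨G α, G* β⟩_G = − B (G* β) α`, and it is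
nondegenerate in both arguments. -/
theorem statement5 (P : CAP V W) :
    (∃! Φ : P.Sol →ₗ[ℝ] P.SolS →ₗ[ℝ] ℝ,
      ∀ α ∈ P.W0, ∀ β ∈ P.W0, ∀ (x : P.Sol) (y : P.SolS),
        (x : V) = P.G α → (y : V) = P.Gs β → Φ x y = P.B (P.G α) β) ∧
    (∀ Φ : P.Sol →ₗ[ℝ] P.SolS →ₗ[ℝ] ℝ,
      (∀ α ∈ P.W0, ∀ β ∈ P.W0, ∀ (x : P.Sol) (y : P.SolS),
        (x : V) = P.G α → (y : V) = P.Gs β → Φ x y = P.B (P.G α) β) →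
      ((∀ α ∈ P.W0, ∀ β ∈ P.W0, ∀ (x : P.Sol) (y : P.SolS),
          (x : V) = P.G α → (y : V) = P.Gs β → Φ x y = - P.B (P.Gs β) α) ∧
       (∀ x : P.Sol, (∀ y : P.SolS, Φ x y = 0) → x = 0) ∧
       (∀ y : P.SolS, (∀ x : P.Sol, Φ x y = 0) → y = 0))) :=
  statement5_general ⟨P.f_mem_p, P.Gp_mem, P.Gp_f, P.f_Gp⟩ ⟨P.f_mem_m, P.Gm_mem, P.Gm_f, P.f_Gm⟩
    ⟨P.fs_mem_p, P.Gsp_mem, P.Gsp_fs, P.fs_Gsp⟩ ⟨P.fs_mem_m, P.Gsm_mem, P.Gsm_fs, P.fs_Gsm⟩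
    P.VSC_eq_sup P.hW0 P.skew P.nd1
end

section
/- Nondegeneracy of the natural pairing between the formal solutions tangent and cotangent spaces, without constraints or gauge (the paper's Lemma in the section on formal T and T* for solutions): Let (f, f*, B, B') be a compatible adjoint pair. Define the formal solutions tangent space T = {v ∈ V_SC : f v = 0} and the formal solutions cotangent space T* = W₀ / f*(V₀). Then the bilinear map T × T* → ℝ, (ψ, [α]) ↦ B(ψ, α), is well-defined and nondegenerate in both arguments. -/
variable {V W : Type*} [AddCommGroup V] [Module ℝ V] [AddCommGroup W] [Module ℝ W]

/-!
Adjointness makes solutions of `f ψ = 0` orthogonal to the range of `f*`, so the pairing descends to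
the quotient. If `α` is orthogonal to all solutions, it is orthogonal to every `G w`; antisymmetry
of the causal Green functions turns this into `B (G* α) w = 0` for all `w`, so `G* α = 0`. The
advanced and retarded solutions of `f* u = α` then coincide, and their common value has support in
both classes at once, hence lies in `V₀`.
-/

section Green

variable {R E F M : Type*} [CommRing R] [AddCommGroup E] [Module R E]
  [AddCommGroup F] [Module R F] [AddCommGroup M] [Module R M]

/-- `G` is a right Green function of `f` for the support classes `X` and `Y`: it solves `f u = w`
with `u ∈ X` for every source `w ∈ Y`. Like `f`, it is a map on the whole space, but its values
outside `Y` are arbitrary. Uniqueness of the solution in `X` is not part of the notion. -/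
structure IsRightGreen (f : E →ₗ[R] F) (X : Submodule R E) (Y : Submodule R F)
    (G : F →ₗ[R] E) : Prop where
  mapsTo : Set.MapsTo G Y X
  rightInvOn : Set.RightInvOn G f Y

namespace IsRightGreen

variable {f : E →ₗ[R] F} {X₁ X₂ S : Submodule R E} {Y₁ Y₂ : Submodule R F} {G₁ G₂ : F →ₗ[R] E}
  {w : F}

theorem sub_apply_mem (h₁ : IsRightGreen f X₁ Y₁ G₁) (h₂ : IsRightGreen f X₂ Y₂ G₂)
    (hX₁ : X₁ ≤ S) (hX₂ : X₂ ≤ S) (hw : w ∈ Y₁ ⊓ Y₂) : (G₁ - G₂) w ∈ S :=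
  S.sub_mem (hX₁ (h₁.mapsTo hw.1)) (hX₂ (h₂.mapsTo hw.2))

theorem map_sub_apply_eq_zero (h₁ : IsRightGreen f X₁ Y₁ G₁) (h₂ : IsRightGreen f X₂ Y₂ G₂)
    (hw : w ∈ Y₁ ⊓ Y₂) : f ((G₁ - G₂) w) = 0 := by
  rw [LinearMap.sub_apply, map_sub, h₁.rightInvOn hw.1, h₂.rightInvOn hw.2, sub_self]

theorem exists_eq_map_of_sub_apply_eq_zero (h₁ : IsRightGreen f X₁ Y₁ G₁)
    (h₂ : IsRightGreen f X₂ Y₂ G₂) (hw : w ∈ Y₁ ⊓ Y₂) (h : (G₁ - G₂) w = 0) :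
    ∃ u ∈ X₁ ⊓ X₂, w = f u := by
  have hG : G₁ w = G₂ w := sub_eq_zero.mp h
  exact ⟨G₁ w, ⟨h₁.mapsTo hw.1, hG ▸ h₂.mapsTo hw.2⟩, (h₁.rightInvOn hw.1).symm⟩

end IsRightGreen

theorem pairing_eq_of_sub_eq_map {f f' : E →ₗ[R] F} {B B' : E →ₗ[R] F →ₗ[R] M} {ψ u : E}
    {α α' : F} (adj : B ψ (f' u) = B' u (f ψ)) (hψ : f ψ = 0) (h : α - α' = f' u) :
    B ψ α = B ψ α' := by
  rw [← sub_eq_zero, ← map_sub, h, adj, hψ, map_zero]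

theorem apply_eq_zero_of_skew {B : E →ₗ[R] F →ₗ[R] M} {S : Submodule R E} {Y : Submodule R F}
    {G G' : F →ₗ[R] E} {α : F} (hS : G' α ∈ S)
    (skew : ∀ w ∈ Y, B (G w) α = -B (G' α) w)
    (nondeg : ∀ v ∈ S, (∀ w ∈ Y, B v w = 0) → v = 0)
    (hα : ∀ w ∈ Y, B (G w) α = 0) : G' α = 0 :=
  nondeg _ hS fun w hw => neg_eq_zero.mp ((skew w hw).symm.trans (hα w hw))

theorem statement6_general {f f' : E →ₗ[R] F} {X₁ X₂ S : Submodule R E} {Y₁ Y₂ : Submodule R F}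
    {G₁ G₂ G₁' G₂' : F →ₗ[R] E} {B B' : E →ₗ[R] F →ₗ[R] M}
    (hX₁ : X₁ ≤ S) (hX₂ : X₂ ≤ S)
    (h₁ : IsRightGreen f X₁ Y₁ G₁) (h₂ : IsRightGreen f X₂ Y₂ G₂)
    (h₁' : IsRightGreen f' X₁ Y₁ G₁') (h₂' : IsRightGreen f' X₂ Y₂ G₂')
    (adj : ∀ v ∈ S, ∀ u ∈ X₁ ⊓ X₂, B v (f' u) = B' u (f v))
    (skew : ∀ w ∈ Y₁ ⊓ Y₂, ∀ w' ∈ Y₁ ⊓ Y₂, B ((G₁ - G₂) w) w' = -B ((G₁' - G₂') w') w)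
    (nondeg : ∀ v ∈ S, (∀ w ∈ Y₁ ⊓ Y₂, B v w = 0) → v = 0) :
    (∀ ψ ∈ S, f ψ = 0 →
      ∀ α ∈ Y₁ ⊓ Y₂, ∀ α' ∈ Y₁ ⊓ Y₂, (∃ u ∈ X₁ ⊓ X₂, α - α' = f' u) → B ψ α = B ψ α') ∧
    (∀ ψ ∈ S, f ψ = 0 → (∀ α ∈ Y₁ ⊓ Y₂, B ψ α = 0) → ψ = 0) ∧
    (∀ α ∈ Y₁ ⊓ Y₂, (∀ ψ ∈ S, f ψ = 0 → B ψ α = 0) → ∃ u ∈ X₁ ⊓ X₂, α = f' u) := by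
  refine ⟨?_, fun ψ hψ _ => nondeg ψ hψ, fun α hα hsol => ?_⟩
  · rintro ψ hψ hfψ α - α' - ⟨u, hu, hαα'⟩
    exact pairing_eq_of_sub_eq_map (adj ψ hψ u hu) hfψ hαα'
  · have orthogonal_causal_range : ∀ w ∈ Y₁ ⊓ Y₂, B ((G₁ - G₂) w) α = 0 := fun w hw =>
      hsol _ (h₁.sub_apply_mem h₂ hX₁ hX₂ hw) (h₁.map_sub_apply_eq_zero h₂ hw)
    have causal_eq_zero : (G₁' - G₂') α = 0 :=
      apply_eq_zero_of_skew (h₁'.sub_apply_mem h₂' hX₁ hX₂ hα) (fun w hw => skew w hw α hα)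
        nondeg orthogonal_causal_range
    exact h₁'.exists_eq_map_of_sub_apply_eq_zero h₂' hα causal_eq_zero

end Green

/-- Nondegeneracy of the natural pairing between the formal solutions tangent space
`T = {v ∈ V_SC : f v = 0}` and cotangent space `T* = W₀ / f*(V₀)` (no constraints or
gauge): the pairing `(ψ, [α]) ↦ B ψ α` is well-defined and nondegenerate in both
arguments (nondegeneracy in the second argument is expressed as: if `B ψ α = 0` for
all solutions `ψ`, then `α` represents `0` in the quotient, i.e. `α ∈ f*(V₀)`). -/
theorem statement6 (P : CAP V W) :
    (∀ ψ ∈ P.VSC, P.f ψ = 0 →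
      ∀ α ∈ P.W0, ∀ α' ∈ P.W0, (∃ u ∈ P.V0, α - α' = P.fs u) →
        P.B ψ α = P.B ψ α') ∧
    (∀ ψ ∈ P.VSC, P.f ψ = 0 → (∀ α ∈ P.W0, P.B ψ α = 0) → ψ = 0) ∧
    (∀ α ∈ P.W0, (∀ ψ ∈ P.VSC, P.f ψ = 0 → P.B ψ α = 0) →
      ∃ u ∈ P.V0, α = P.fs u) := by
  simpa only [P.hV0, P.hW0] using statement6_general P.hVp P.hVm ⟨P.Gp_mem, P.f_Gp⟩
    ⟨P.Gm_mem, P.f_Gm⟩ ⟨P.Gsp_mem, P.fs_Gsp⟩ ⟨P.Gsm_mem, P.fs_Gsm⟩ (P.hV0 ▸ P.adj1)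
    (P.hW0 ▸ P.skew) (P.hW0 ▸ P.nd1)
end

section
/- Nondegeneracy of the natural pairing between the formal gauge invariant solutions tangent and cotangent spaces (the paper's main Lemma on T and T* for solutions with constraints and gauge): Let (f, f*, B, B') be a compatible adjoint pair and let globally recognizable abstract gauge data over (V_SC, W₀, B) be given. Let abstract constraint data be given: real vector spaces X, Λ₀, Y'₀, Y''; linear maps c : V_SC → X (linearized constraints), c⋆ : Λ₀ → W₀ (adjoint constraints), ρ : Y'₀ → W₀ (constraint parametrization) and ρ⋆ : V_SC → Y'' (its adjoint); and bilinear maps F : Y'₀ × Y'' → ℝ and F_c : X × Λ₀ → ℝ; such that: (1) c(G(ρ y)) = 0 for all y ∈ Y'₀; (2) B(G(ρ y), w) = −F(y, ρ⋆(G* w)) for all y ∈ Y'₀ and w ∈ W₀; (3) if F(y, ρ⋆(G* w)) = 0 for all y ∈ Y'₀ then ρ⋆(G* w) = 0; (4) B(v, c⋆ λ) = F_c(c v, λ) for all v ∈ V_SC and λ ∈ Λ₀; and (5) [global parametrizability] for every w ∈ W₀ with ρ⋆(G* w) = 0, if B(ψ, w) = 0 for every ψ ∈ V_SC with f ψ =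 0 and c ψ = 0, then there exists λ ∈ Λ₀ with G* w = G*(c⋆ λ). Define Sol = {ψ ∈ V_SC : f ψ = 0 and c ψ = 0}, N = f*(V₀) + c⋆(Λ₀) ⊆ W₀, T̄ = Sol / (Sol ∩ g(P_SC)) and T̄* = {α ∈ W₀ : g⋆ α ∈ g⋆(N)} / N. Then the bilinear map T̄ × T̄* → ℝ, ([ψ], [α]) ↦ B(ψ, α), is well-defined and nondegenerate in both arguments. -/
variable {V W : Type*} [AddCommGroup V] [Module ℝ V] [AddCommGroup W] [Module ℝ W]

/-!
Everything rests on identifying `N = f*(V₀) + c⋆(Λ₀)` as the annihilator in `W₀` of the space of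
constrained solutions. That `N` annihilates solutions is adjointness. Conversely, if `α`
annihilates all constrained solutions, testing it against the solutions `G (ρ y)` gives
`ρ⋆ (G* α) = 0`, so parametrizability yields `G* α = G* (c⋆ λ)`, and `α - c⋆ λ` lies in the kernel
of `G*`, which on `W₀` is `f*(V₀)`.

An element of `V_SC` annihilating every `α` with `g⋆ α ∈ g⋆ N` annihilates in particular the kernel
of `g⋆`, which by recognizability happens only for pure gauge elements. A pure gauge solution
pairs with `α` through `g⋆ α` alone, so it cannot distinguish `α` from an element of `N`, and pairs
to zero.
-/

section Gauge

variable {R E F M P Z U Q : Type*} [CommSemiring R] [AddCommMonoid E] [Module R E]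
  [AddCommMonoid F] [Module R F] [AddCommMonoid M] [Module R M] [AddCommMonoid Z] [Module R Z]
  {B : E →ₗ[R] F →ₗ[R] M} {F₀ : Submodule R F} {g : P → E} {gs : F →ₗ[R] Z}

theorem pairing_gauge_eq_zero {D : P → Z → M} (hD : ∀ ε, ∀ w ∈ F₀, B (g ε) w = D ε (gs w))
    {N : Submodule R F} (hN : N ≤ F₀) {ε : P} (hε : ∀ n ∈ N, B (g ε) n = 0)
    {w : F} (hw : w ∈ F₀) (hgw : gs w ∈ N.map gs) : B (g ε) w = 0 := by
  obtain ⟨n, hn, hnw⟩ := hgw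
  calc B (g ε) w = D ε (gs w) := hD ε w hw
    _ = D ε (gs n) := by rw [hnw]
    _ = B (g ε) n := (hD ε n (hN hn)).symm
    _ = 0 := hε n hn

theorem exists_eq_gauge_of_pairing_ker_eq_zero [Zero U] {E₀ : Submodule R E} {g' : E → U}
    {g's : Q → F} (hg's : ∀ τ, g's τ ∈ F₀) (hgsg's : ∀ τ, gs (g's τ) = 0) {D' : U → Q → M}
    (hD' : ∀ v ∈ E₀, ∀ τ, B v (g's τ) = D' (g' v) τ)
    (hD'_nondeg : ∀ v ∈ E₀, (∀ τ, D' (g' v) τ = 0) → g' v = 0)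
    (hrec : ∀ v ∈ E₀, g' v = 0 → (∀ w ∈ F₀, gs w = 0 → B v w = 0) → ∃ ε, v = g ε)
    {v : E} (hv : v ∈ E₀) (hker : ∀ w ∈ F₀, gs w = 0 → B v w = 0) : ∃ ε, v = g ε := by
  have hg'v : g' v = 0 := hD'_nondeg v hv fun τ ↦ by
    rw [← hD' v hv τ, hker _ (hg's τ) (hgsg's τ)]
  exact hrec v hv hg'v hker

end Gauge

namespace CAP

theorem G_mem_Sol (P : CAP V W) {w : W} (hw : w ∈ P.W0) : P.G w ∈ P.Sol := by
  obtain ⟨hp, hm⟩ : w ∈ P.Wp ⊓ P.Wm := P.hW0 ▸ hw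
  refine ⟨P.VSC.sub_mem (P.hVp (P.Gp_mem w hp)) (P.hVm (P.Gm_mem w hm)),
    LinearMap.mem_ker.mpr ?_⟩
  rw [G, LinearMap.sub_apply, map_sub, P.f_Gp w hp, P.f_Gm w hm, sub_self]

theorem map_fs_V0 (P : CAP V W) : P.V0.map P.fs = P.W0 ⊓ LinearMap.ker P.Gs := by
  rw [P.hV0, P.hW0]
  ext w
  constructor
  · rintro ⟨u, ⟨hp, hm⟩, rfl⟩
    refine ⟨⟨P.fs_mem_p u hp, P.fs_mem_m u hm⟩, LinearMap.mem_ker.mpr ?_⟩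
    rw [Gs, LinearMap.sub_apply, P.Gsp_fs u hp, P.Gsm_fs u hm, sub_self]
  · rintro ⟨⟨hp, hm⟩, hker⟩
    have heq : P.Gsp w = P.Gsm w := sub_eq_zero.mp hker
    exact ⟨P.Gsp w, ⟨P.Gsp_mem w hp, heq ▸ P.Gsm_mem w hm⟩, P.fs_Gsp w hp⟩

section Constraints

variable {X L Z Y Y' : Type*} [AddCommGroup X] [Module ℝ X] [AddCommGroup L] [Module ℝ L]
  [AddCommGroup Z] [Module ℝ Z]

/-- The spacelike compactly supported solutions of `f ψ = 0` that satisfy the constraints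
`c ψ = 0`: the space `Sol` of the paper, whereas `CAP.Sol` ignores the constraints. -/
def constrainedSol (P : CAP V W) (c : V →ₗ[ℝ] X) : Submodule ℝ V :=
  P.Sol ⊓ LinearMap.ker c

/-- The space `N = f*(V₀) + c⋆(Λ₀)` of on-shell trivial observables, by which the cotangent space
is divided. -/
def trivialObservables (P : CAP V W) (cs : L →ₗ[ℝ] W) : Submodule ℝ W :=
  P.V0.map P.fs ⊔ LinearMap.range cs

/-- The space `{α ∈ W₀ : g⋆ α ∈ g⋆(N)}` of observables that are gauge invariant on shell; its
quotient by `N` is the cotangent space `T̄*`. -/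
def gaugeInvariantObservables (P : CAP V W) (cs : L →ₗ[ℝ] W) (gs : W →ₗ[ℝ] Z) : Submodule ℝ W :=
  P.W0 ⊓ ((P.trivialObservables cs).map gs).comap gs

variable {P : CAP V W} {c : V →ₗ[ℝ] X} {cs : L →ₗ[ℝ] W} {gs : W →ₗ[ℝ] Z} {ψ : V} {α : W}

theorem mem_constrainedSol :
    ψ ∈ P.constrainedSol c ↔ ψ ∈ P.VSC ∧ P.f ψ = 0 ∧ c ψ = 0 :=
  and_assoc

theorem mem_trivialObservables :
    α ∈ P.trivialObservables cs ↔ ∃ u ∈ P.V0, ∃ l, α = P.fs u + cs l := by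
  simp [trivialObservables, Submodule.mem_sup, eq_comm]

theorem mem_gaugeInvariantObservables :
    α ∈ P.gaugeInvariantObservables cs gs ↔
      α ∈ P.W0 ∧ ∃ u ∈ P.V0, ∃ l, gs α = gs (P.fs u + cs l) := by
  refine and_congr_right fun _ ↦ ?_
  constructor
  · rintro ⟨n, hn, hgn⟩
    obtain ⟨u, hu, l, rfl⟩ := mem_trivialObservables.mp hn
    exact ⟨u, hu, l, hgn.symm⟩
  · rintro ⟨u, hu, l, hgα⟩
    exact ⟨_, mem_trivialObservables.mpr ⟨u, hu, l, rfl⟩, hgα.symm⟩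

theorem mem_gaugeInvariantObservables_of_gs_eq_zero (hα : α ∈ P.W0) (hgα : gs α = 0) :
    α ∈ P.gaugeInvariantObservables cs gs :=
  ⟨hα, 0, Submodule.zero_mem _, by rw [map_zero, hgα]⟩

theorem trivialObservables_le_W0 (hcs : ∀ l, cs l ∈ P.W0) : P.trivialObservables cs ≤ P.W0 :=
  sup_le (P.map_fs_V0.trans_le inf_le_left) <| by
    rintro _ ⟨l, rfl⟩
    exact hcs l

theorem B_eq_zero_of_mem_trivialObservables {Fc : X →ₗ[ℝ] L →ₗ[ℝ] ℝ}
    (hFc : ∀ v ∈ P.VSC, ∀ l, P.B v (cs l) = Fc (c v) l)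
    (hψ : ψ ∈ P.constrainedSol c) (hα : α ∈ P.trivialObservables cs) : P.B ψ α = 0 := by
  obtain ⟨hψSC, hfψ, hcψ⟩ := mem_constrainedSol.mp hψ
  obtain ⟨u, hu, l, rfl⟩ := mem_trivialObservables.mp hα
  calc P.B ψ (P.fs u + cs l) = P.B' u (P.f ψ) + Fc (c ψ) l := by
        rw [map_add, P.adj1 ψ hψSC u hu, hFc ψ hψSC l]
    _ = 0 := by rw [hfψ, hcψ, map_zero, map_zero, LinearMap.zero_apply, add_zero]

theorem mem_trivialObservables_of_Gs_eq {l : L} (hα : α ∈ P.W0) (hl : cs l ∈ P.W0)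
    (hGs : P.Gs α = P.Gs (cs l)) : α ∈ P.trivialObservables cs := by
  have hmem : α - cs l ∈ P.V0.map P.fs := by
    rw [P.map_fs_V0]
    exact ⟨P.W0.sub_mem hα hl, LinearMap.mem_ker.mpr (by rw [map_sub, hGs, sub_self])⟩
  rw [← sub_add_cancel α (cs l)]
  exact Submodule.add_mem_sup hmem (LinearMap.mem_range_self cs l)

theorem parametrization_Gs_eq_zero_of_B_eq_zero [Zero Y'] {ρ : Y → W} (hρ : ∀ y, ρ y ∈ P.W0)
    {ρs : V → Y'} {F : Y → Y' → ℝ} (hcGρ : ∀ y, c (P.G (ρ y)) = 0)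
    (hF : ∀ y, ∀ w ∈ P.W0, P.B (P.G (ρ y)) w = -F y (ρs (P.Gs w)))
    (hF_nondeg : ∀ w ∈ P.W0, (∀ y, F y (ρs (P.Gs w)) = 0) → ρs (P.Gs w) = 0)
    (hα : α ∈ P.W0) (hB : ∀ ψ ∈ P.constrainedSol c, P.B ψ α = 0) : ρs (P.Gs α) = 0 := by
  refine hF_nondeg α hα fun y ↦ neg_eq_zero.mp ?_
  rw [← hF y α hα]
  exact hB _ ⟨P.G_mem_Sol (hρ y), hcGρ y⟩

end Constraints

end CAP

theorem statement8_general {PSC Z0 USC Q0 X L0 Y1 Y2 : Type*}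
    [AddCommGroup PSC] [Module ℝ PSC] [AddCommGroup Z0] [Module ℝ Z0]
    [AddCommGroup USC] [Module ℝ USC] [AddCommGroup Q0] [Module ℝ Q0]
    [AddCommGroup X] [Module ℝ X] [AddCommGroup L0] [Module ℝ L0]
    [AddCommGroup Y1] [Module ℝ Y1] [AddCommGroup Y2] [Module ℝ Y2]
    (P : CAP V W) (g : PSC →ₗ[ℝ] V) (gs : W →ₗ[ℝ] Z0) (g' : V →ₗ[ℝ] USC)
    (g's : Q0 →ₗ[ℝ] W) (hg's : ∀ τ, g's τ ∈ P.W0) (hgsg's : ∀ τ, gs (g's τ) = 0)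
    (Db : PSC →ₗ[ℝ] Z0 →ₗ[ℝ] ℝ) (Eb : USC →ₗ[ℝ] Q0 →ₗ[ℝ] ℝ)
    (hDb : ∀ ε, ∀ w ∈ P.W0, P.B (g ε) w = Db ε (gs w))
    (hEb : ∀ v ∈ P.VSC, ∀ τ, P.B v (g's τ) = Eb (g' v) τ)
    (hEnd : ∀ v ∈ P.VSC, (∀ τ, Eb (g' v) τ = 0) → g' v = 0)
    (hrec : ∀ v ∈ P.VSC, g' v = 0 → (∀ w ∈ P.W0, gs w = 0 → P.B v w = 0) → ∃ ε, v = g ε)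
    (c : V →ₗ[ℝ] X) (cs : L0 →ₗ[ℝ] W) (hcs : ∀ l, cs l ∈ P.W0)
    (ρ : Y1 →ₗ[ℝ] W) (hρ : ∀ y, ρ y ∈ P.W0) (ρs : V →ₗ[ℝ] Y2)
    (F : Y1 →ₗ[ℝ] Y2 →ₗ[ℝ] ℝ) (Fc : X →ₗ[ℝ] L0 →ₗ[ℝ] ℝ)
    (hcGρ : ∀ y, c (P.G (ρ y)) = 0)
    (hF : ∀ y, ∀ w ∈ P.W0, P.B (P.G (ρ y)) w = -F y (ρs (P.Gs w)))
    (hFnd : ∀ w ∈ P.W0, (∀ y, F y (ρs (P.Gs w)) = 0) → ρs (P.Gs w) = 0)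
    (hFc : ∀ v ∈ P.VSC, ∀ l, P.B v (cs l) = Fc (c v) l)
    (hpar : ∀ w ∈ P.W0, ρs (P.Gs w) = 0 → (∀ ψ ∈ P.constrainedSol c, P.B ψ w = 0) →
      ∃ l, P.Gs w = P.Gs (cs l)) :
    (∀ ψ ∈ P.constrainedSol c, ∀ ψ' ∈ P.constrainedSol c,
      ∀ α ∈ P.gaugeInvariantObservables cs gs, ∀ α',
      (∃ ε, ψ - ψ' = g ε) → α - α' ∈ P.trivialObservables cs → P.B ψ α = P.B ψ' α') ∧
    (∀ ψ ∈ P.VSC,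
      (∀ α ∈ P.gaugeInvariantObservables cs gs, P.B ψ α = 0) → ∃ ε, ψ = g ε) ∧
    (∀ α ∈ P.W0, (∀ ψ ∈ P.constrainedSol c, P.B ψ α = 0) → α ∈ P.trivialObservables cs) := by
  refine ⟨fun ψ hψ ψ' hψ' α ⟨hα, hgα⟩ α' ⟨ε, hε⟩ hαα' ↦ ?_, fun ψ hψ hB ↦ ?_, fun α hα hB ↦ ?_⟩
  · have hgauge : P.B (ψ - ψ') α = 0 := by
      have hsol : g ε ∈ P.constrainedSol c := hε ▸ sub_mem hψ hψ'
      rw [hε]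
      exact pairing_gauge_eq_zero (g := g) (D := fun ε z ↦ Db ε z) hDb
        (CAP.trivialObservables_le_W0 hcs)
        (fun _ hn ↦ CAP.B_eq_zero_of_mem_trivialObservables hFc hsol hn) hα hgα
    have htrivial : P.B ψ' (α - α') = 0 :=
      CAP.B_eq_zero_of_mem_trivialObservables hFc hψ' hαα'
    rw [map_sub, LinearMap.sub_apply, sub_eq_zero] at hgauge
    rw [map_sub, sub_eq_zero] at htrivial
    exact hgauge.trans htrivial
  · exact exists_eq_gauge_of_pairing_ker_eq_zero hg's hgsg's (D' := fun u τ ↦ Eb u τ) hEb hEnd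
      hrec hψ fun w hw hgw ↦ hB w (CAP.mem_gaugeInvariantObservables_of_gs_eq_zero hw hgw)
  · have hρs := CAP.parametrization_Gs_eq_zero_of_B_eq_zero hρ (F := fun y y' ↦ F y y')
      hcGρ hF hFnd hα hB
    obtain ⟨l, hl⟩ := hpar α hα hρs hB
    exact CAP.mem_trivialObservables_of_Gs_eq hα (hcs l) hl

/-- Nondegeneracy of the natural pairing between the formal gauge invariant solutions
tangent space `T̄ = Sol / (Sol ∩ g(P_SC))` and cotangent space
`T̄* = {α ∈ W₀ : g⋆ α ∈ g⋆(N)} / N`, where `Sol = {ψ ∈ V_SC : f ψ = 0, c ψ = 0}` and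
`N = f*(V₀) + c⋆(Λ₀)`, given a compatible adjoint pair, globally recognizable abstract
gauge data and globally parametrizable abstract constraint data. The pairing
`([ψ], [α]) ↦ B ψ α` is well-defined and nondegenerate in both arguments. -/
theorem statement8 {PSC Z0 USC Q0 X L0 Y1 Y2 : Type*}
    [AddCommGroup PSC] [Module ℝ PSC] [AddCommGroup Z0] [Module ℝ Z0]
    [AddCommGroup USC] [Module ℝ USC] [AddCommGroup Q0] [Module ℝ Q0]
    [AddCommGroup X] [Module ℝ X] [AddCommGroup L0] [Module ℝ L0]
    [AddCommGroup Y1] [Module ℝ Y1] [AddCommGroup Y2] [Module ℝ Y2]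
    (P : CAP V W)
    -- abstract gauge data over (V_SC, W₀, B):
    (g : PSC →ₗ[ℝ] V) (hg : ∀ ε : PSC, g ε ∈ P.VSC)
    (gs : W →ₗ[ℝ] Z0)
    (g' : V →ₗ[ℝ] USC)
    (g's : Q0 →ₗ[ℝ] W) (hg's : ∀ τ : Q0, g's τ ∈ P.W0)
    (hgg' : ∀ ε : PSC, g' (g ε) = 0)
    (hgsg's : ∀ τ : Q0, gs (g's τ) = 0)
    (Db : PSC →ₗ[ℝ] Z0 →ₗ[ℝ] ℝ) (Eb : USC →ₗ[ℝ] Q0 →ₗ[ℝ] ℝ)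
    (hDb : ∀ ε : PSC, ∀ w ∈ P.W0, P.B (g ε) w = Db ε (gs w))
    (hEb : ∀ v ∈ P.VSC, ∀ τ : Q0, P.B v (g's τ) = Eb (g' v) τ)
    (hEnd : ∀ v ∈ P.VSC, (∀ τ : Q0, Eb (g' v) τ = 0) → g' v = 0)
    -- global recognizability of the gauge data:
    (hrec1 : ∀ v ∈ P.VSC, g' v = 0 →
      (∀ w ∈ P.W0, gs w = 0 → P.B v w = 0) → ∃ ε : PSC, v = g ε)
    (hrec2 : ∀ w ∈ P.W0, gs w = 0 →
      (∀ v ∈ P.VSC, g' v = 0 → P.B v w = 0) → ∃ τ : Q0, w = g's τ)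
    -- abstract constraint data:
    (c : V →ₗ[ℝ] X)
    (cs : L0 →ₗ[ℝ] W) (hcs : ∀ l : L0, cs l ∈ P.W0)
    (ρ : Y1 →ₗ[ℝ] W) (hρ : ∀ y : Y1, ρ y ∈ P.W0)
    (ρs : V →ₗ[ℝ] Y2)
    (F : Y1 →ₗ[ℝ] Y2 →ₗ[ℝ] ℝ) (Fc : X →ₗ[ℝ] L0 →ₗ[ℝ] ℝ)
    (h1 : ∀ y : Y1, c (P.G (ρ y)) = 0)
    (h2 : ∀ y : Y1, ∀ w ∈ P.W0, P.B (P.G (ρ y)) w = - F y (ρs (P.Gs w)))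
    (h3 : ∀ w ∈ P.W0, (∀ y : Y1, F y (ρs (P.Gs w)) = 0) → ρs (P.Gs w) = 0)
    (h4 : ∀ v ∈ P.VSC, ∀ l : L0, P.B v (cs l) = Fc (c v) l)
    -- global parametrizability:
    (h5 : ∀ w ∈ P.W0, ρs (P.Gs w) = 0 →
      (∀ ψ ∈ P.VSC, P.f ψ = 0 → c ψ = 0 → P.B ψ w = 0) →
      ∃ l : L0, P.Gs w = P.Gs (cs l)) :
    -- the pairing ([ψ], [α]) ↦ B ψ α on T̄ × T̄* is well-defined:
    (∀ ψ ∈ P.VSC, P.f ψ = 0 → c ψ = 0 →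
     ∀ ψ' ∈ P.VSC, P.f ψ' = 0 → c ψ' = 0 →
     ∀ α ∈ P.W0, (∃ u ∈ P.V0, ∃ l : L0, gs α = gs (P.fs u + cs l)) →
     ∀ α' ∈ P.W0, (∃ u ∈ P.V0, ∃ l : L0, gs α' = gs (P.fs u + cs l)) →
     (∃ ε : PSC, ψ - ψ' = g ε) →
     (∃ u ∈ P.V0, ∃ l : L0, α - α' = P.fs u + cs l) →
     P.B ψ α = P.B ψ' α') ∧
    -- nondegeneracy in the first argument:
    (∀ ψ ∈ P.VSC, P.f ψ = 0 → c ψ = 0 →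
     (∀ α ∈ P.W0, (∃ u ∈ P.V0, ∃ l : L0, gs α = gs (P.fs u + cs l)) →
        P.B ψ α = 0) →
     ∃ ε : PSC, ψ = g ε) ∧
    -- nondegeneracy in the second argument:
    (∀ α ∈ P.W0, (∃ u ∈ P.V0, ∃ l : L0, gs α = gs (P.fs u + cs l)) →
     (∀ ψ ∈ P.VSC, P.f ψ = 0 → c ψ = 0 → P.B ψ α = 0) →
     ∃ u ∈ P.V0, ∃ l : L0, α = P.fs u + cs l) := by
  have h := statement8_general P g gs g' g's hg's hgsg's Db Eb hDb hEb hEnd hrec1 c cs hcs ρ hρ ρs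
    F Fc h1 h2 h3 h4 (by simpa only [CAP.mem_constrainedSol, and_imp] using h5)
  simp only [CAP.mem_constrainedSol, CAP.mem_gaugeInvariantObservables,
    CAP.mem_trivialObservables, and_imp] at h
  exact ⟨fun ψ hψ hf hc ψ' hψ' hf' hc' α hα hgα α' _ _ ↦ h.1 ψ hψ hf hc ψ' hψ' hf' hc' α hα hgα α',
    fun ψ hψ _ _ ↦ h.2.1 ψ hψ, fun α hα _ ↦ h.2.2 α hα⟩
end
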